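/- Spatial semidiscretization error for the Schrödinger equation with bilinear control Hamiltonian: let φ : [0,T] × ℝ → ℂ be 1-periodic in its second argument, continuously differentiable in t, four times continuously differentiable in x (with all these derivatives continuous on [0,T] × ℝ), and satisfy i ∂_t φ(t,x) = -f1(t) ∂_x² φ(t,x) + f2(t) V(x) φ(t,x) for all (t,x) ∈ [0,T] × ℝ. Let ψ : [0,T] → ℂⁿ be the solution of the semidiscrete equation i ψ'(t) = (f1(t) H1 + f2(t) H2) ψ(t) with initial condition ψ(0) = (φ(0, k/n))_{k=0}^{n-1}, where H1 and H2 are the matrices of the finite-difference setting. Then for every t ∈ [0,T], (1/√n) · ‖(φ(t, k/n))_{k=0}^{n-1} - ψ(t)‖ ≤ (t/(3n²)) · (sup_{s∈[0,T]} |f1(s)|) · sup_{s∈[0,t], y∈[0,1]} |∂_x⁴ φ(s,y)|, where ‖·‖ is the Euclidean 2-norm on ℂⁿ. -/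

import Mathlib

open Matrix

noncomputable section

/-- Square `n × n` complex matrices. -/
abbrev Mat (n : ℕ) := Matrix (Fin n) (Fin n) ℂ

/-- The Euclidean 2-norm of a vector in `ℂⁿ`. -/
noncomputable def evnorm {n : ℕ} (v : Fin n → ℂ) : ℝ :=
  ‖(WithLp.equiv 2 (Fin n → ℂ)).symm v‖

/-- The `n×n` periodic central finite-difference discretization of `-Δ` on `[0,1]`:
`(H1)_{kk} = 2n²`, `(H1)_{k,k+1 mod n} = (H1)_{k,k-1 mod n} = -n²`, all other entries `0`. -/
noncomputable def fdH1 (n : ℕ) : Mat n :=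
  Matrix.of fun k l : Fin n =>
    if (l : ℕ) = (k : ℕ) then 2 * (n : ℂ)^2
    else if (l : ℕ) = ((k : ℕ) + 1) % n ∨ (l : ℕ) = ((k : ℕ) + n - 1) % n then -(n : ℂ)^2
    else 0

/-- The diagonal potential matrix `H2 = diag(V(0), V(1/n), …, V((n-1)/n))`. -/
noncomputable def fdH2 (n : ℕ) (V : ℝ → ℝ) : Mat n :=
  Matrix.diagonal fun k : Fin n => ((V (((k : ℕ) : ℝ) / (n : ℝ))) : ℂ)

/-- The difference matrix: `(D1)_{kk} = -n`, `(D1)_{k,k-1 mod n} = n`, all other entries `0`. -/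
noncomputable def fdD1 (n : ℕ) : Mat n :=
  Matrix.of fun k l : Fin n =>
    if (l : ℕ) = (k : ℕ) then -(n : ℂ)
    else if (l : ℕ) = ((k : ℕ) + n - 1) % n then (n : ℂ)
    else 0

/-!
By the Schrödinger equation, the error `D = (φ(t, k / n))ₖ - ψ` satisfies `D' = -i H D + i f1 τ`,
where `H = f1 H1 + f2 H2` and `τ` is the truncation error of the finite-difference Laplacian.
Since `H` is Hermitian, `-i H` does not change the Euclidean norm, so `‖D‖` grows at most at the
rate `|f1| ‖τ‖`. Adding the Taylor expansions of `φ(t, ·)` to the right and to the left of a grid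
point cancels the odd-order terms and bounds each entry of `τ` by `sup |∂ₓ⁴φ| / (3n²)`.
-/

section EnergyEstimate

open Set

variable {𝕜 E : Type*} [RCLike 𝕜] [NormedAddCommGroup E] [NormedSpace ℝ E]

variable (𝕜) in
theorem hasDerivWithinAt_norm_sq [InnerProductSpace 𝕜 E] {D : ℝ → E} {D' : E} {s : Set ℝ} {x : ℝ}
    (hD : HasDerivWithinAt D D' s x) :
    HasDerivWithinAt (fun y => ‖D y‖ ^ 2) (2 * RCLike.re (inner 𝕜 (D x) D')) s x := by
  have h := RCLike.reCLM.hasFDerivAt.comp_hasDerivWithinAt x (hD.inner 𝕜 hD)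
  simpa only [Function.comp_def, RCLike.reCLM_apply, inner_self_eq_norm_sq, map_add,
    inner_re_symm D', ← two_mul] using h

theorem norm_le_add_mul_of_re_inner_deriv_right_le [InnerProductSpace 𝕜 E] {D D' : ℝ → E}
    {a b c : ℝ} (hc : 0 ≤ c) (hD : ContinuousOn D (Icc a b))
    (hD' : ∀ s ∈ Ico a b, HasDerivWithinAt D (D' s) (Ici s) s)
    (hinner : ∀ s ∈ Ico a b, RCLike.re (inner 𝕜 (D s) (D' s)) ≤ c * ‖D s‖) :
    ∀ s ∈ Icc a b, ‖D s‖ ≤ ‖D a‖ + c * (s - a) := by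
  intro t ht
  refine le_of_forall_pos_le_add fun ε hε => ?_
  -- The square root of `‖D‖ ^ 2 + ε ^ 2` is differentiable even where `D` vanishes.
  have hpos : ∀ s, 0 < ‖D s‖ ^ 2 + ε ^ 2 := fun s => by positivity
  have hnorm_le : ∀ s, ‖D s‖ ≤ √(‖D s‖ ^ 2 + ε ^ 2) := fun s =>
    Real.le_sqrt_of_sq_le (le_add_of_nonneg_right (sq_nonneg ε))
  have hderiv : ∀ s ∈ Ico a b, HasDerivWithinAt (fun s => √(‖D s‖ ^ 2 + ε ^ 2))
      (RCLike.re (inner 𝕜 (D s) (D' s)) / √(‖D s‖ ^ 2 + ε ^ 2)) (Ici s) s := by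
    intro s hs
    convert ((hasDerivWithinAt_norm_sq 𝕜 (hD' s hs)).add_const (ε ^ 2)).sqrt (hpos s).ne' using 1
    rw [mul_div_mul_left _ _ two_ne_zero]
  have hgrowth : √(‖D t‖ ^ 2 + ε ^ 2) ≤ √(‖D a‖ ^ 2 + ε ^ 2) + c * (t - a) := by
    refine image_le_of_deriv_right_le_deriv_boundary
      (B := fun s => √(‖D a‖ ^ 2 + ε ^ 2) + c * (s - a)) (B' := fun _ => c)
      (by fun_prop) hderiv (by simp) (by fun_prop) (fun s _ => ?_) (fun s hs => ?_) ht
    · simpa only [id, mul_one] using ((((hasDerivAt_id s).sub_const a).const_mul c).const_add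
        (√(‖D a‖ ^ 2 + ε ^ 2))).hasDerivWithinAt
    · rw [div_le_iff₀ (Real.sqrt_pos.2 (hpos s))]
      exact (hinner s hs).trans (mul_le_mul_of_nonneg_left (hnorm_le s) hc)
  have hstart : √(‖D a‖ ^ 2 + ε ^ 2) ≤ ‖D a‖ + ε :=
    Real.sqrt_le_iff.2 ⟨by positivity, by nlinarith [mul_nonneg (norm_nonneg (D a)) hε.le]⟩
  linarith [hnorm_le t]

theorem norm_le_add_mul_of_hasDeriv_right_symmetric_add [InnerProductSpace ℂ E]
    {A : ℝ → E →ₗ[ℂ] E} {D r : ℝ → E} {a b c : ℝ} (hc : 0 ≤ c)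
    (hA : ∀ s ∈ Ico a b, (A s).IsSymmetric) (hD : ContinuousOn D (Icc a b))
    (hD' : ∀ s ∈ Ico a b, HasDerivWithinAt D (-Complex.I • A s (D s) + r s) (Ici s) s)
    (hr : ∀ s ∈ Ico a b, ‖r s‖ ≤ c) :
    ∀ s ∈ Icc a b, ‖D s‖ ≤ ‖D a‖ + c * (s - a) := by
  refine norm_le_add_mul_of_re_inner_deriv_right_le (𝕜 := ℂ) hc hD hD' fun s hs => ?_
  have hskew : RCLike.re (inner ℂ (D s) (-Complex.I • A s (D s))) = 0 := by
    simpa [inner_smul_right] using (hA s hs).im_inner_self_apply (D s)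
  calc RCLike.re (inner ℂ (D s) (-Complex.I • A s (D s) + r s))
      = RCLike.re (inner ℂ (D s) (r s)) := by rw [inner_add_right, map_add, hskew, zero_add]
    _ ≤ ‖D s‖ * ‖r s‖ := re_inner_le_norm _ _
    _ ≤ c * ‖D s‖ := by rw [mul_comm]; gcongr; exact hr s hs

theorem evnorm_le_add_mul_of_hasDerivWithinAt_isHermitian_add {n : ℕ} {A : ℝ → Mat n}
    {D r : ℝ → Fin n → ℂ} {a b c : ℝ} (hab : a ≤ b) (hc : 0 ≤ c)
    (hA : ∀ s ∈ Icc a b, (A s).IsHermitian)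
    (hD : ∀ s ∈ Icc a b, HasDerivWithinAt D (-Complex.I • A s *ᵥ D s + r s) (Icc a b) s)
    (hr : ∀ s ∈ Icc a b, evnorm (r s) ≤ c) :
    evnorm (D b) ≤ evnorm (D a) + c * (b - a) := by
  have hD2 : ∀ s ∈ Icc a b, HasDerivWithinAt (fun s => WithLp.toLp 2 (D s))
      (-Complex.I • (A s).toEuclideanLin (WithLp.toLp 2 (D s)) + WithLp.toLp 2 (r s))
      (Icc a b) s := fun s hs =>
    (PiLp.continuousLinearEquiv 2 ℝ fun _ : Fin n => ℂ).symm.hasFDerivAt.comp_hasDerivWithinAt s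
      (hD s hs)
  exact norm_le_add_mul_of_hasDeriv_right_symmetric_add
    (A := fun s => (A s).toEuclideanLin) (r := fun s => WithLp.toLp 2 (r s)) hc
    (fun s hs => isSymmetric_toEuclideanLin_iff.2 (hA s (Ico_subset_Icc_self hs)))
    (fun s hs => (hD2 s hs).continuousWithinAt)
    (fun s hs => (hD2 s (Ico_subset_Icc_self hs)).mono_of_mem_nhdsWithin
      (Icc_mem_nhdsGE_of_mem hs))
    (fun s hs => hr s (Ico_subset_Icc_self hs)) b (right_mem_Icc.2 hab)

end EnergyEstimate

theorem evnorm_le_sqrt_mul {n : ℕ} {v : Fin n → ℂ} {c : ℝ} (hc : 0 ≤ c) (hv : ∀ k, ‖v k‖ ≤ c) :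
    evnorm v ≤ √n * c := by
  calc evnorm v = √(∑ k, ‖v k‖ ^ 2) := EuclideanSpace.norm_eq _
    _ ≤ √(∑ _k : Fin n, c ^ 2) := by gcongr with k; exact hv k
    _ = √n * c := by simp [Real.sqrt_sq hc]

theorem evnorm_zero {n : ℕ} : evnorm (0 : Fin n → ℂ) = 0 :=
  norm_zero

section CentralDifference

open Set

variable {E : Type*} [NormedAddCommGroup E] [NormedSpace ℝ E]

theorem norm_sub_taylor_le {f : ℝ → E} {n : ℕ} {x h M : ℝ} (hh : 0 < h)
    (hf : ContDiff ℝ (n + 1) f)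
    (hM : ∀ y ∈ Icc x (x + h), ‖iteratedDeriv (n + 1) f y‖ ≤ M) :
    ‖f (x + h) - ∑ k ∈ Finset.range (n + 1), (h ^ k / k.factorial) • iteratedDeriv k f x‖ ≤
      M * h ^ (n + 1) / n.factorial := by
  have hx : x < x + h := lt_add_of_pos_right x hh
  have hwithin : ∀ k ≤ n + 1, ∀ y ∈ Icc x (x + h),
      iteratedDerivWithin k f (Icc x (x + h)) y = iteratedDeriv k f y := fun k hk y hy =>
    iteratedDerivWithin_eq_iteratedDeriv (uniqueDiffOn_Icc hx)
      (hf.of_le (mod_cast hk)).contDiffAt hy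
  have hremainder := taylor_mean_remainder_bound hx.le hf.contDiffOn (right_mem_Icc.2 hx.le)
    fun y hy => (hwithin (n + 1) le_rfl y hy).symm ▸ hM y hy
  rw [taylor_within_apply, add_sub_cancel_left] at hremainder
  convert hremainder using 5 with k hk
  · exact div_eq_inv_mul _ _
  · exact (hwithin k (Finset.mem_range.1 hk).le x (left_mem_Icc.2 hx.le)).symm

theorem norm_centralDifference_sub_le {f : ℝ → E} (hf : ContDiff ℝ 4 f) {x h M : ℝ} (hh : 0 < h)
    (hM : ∀ y ∈ Icc (x - h) (x + h), ‖iteratedDeriv 4 f y‖ ≤ M) :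
    ‖f (x + h) + f (x - h) - (2 : ℝ) • f x - h ^ 2 • iteratedDeriv 2 f x‖ ≤ M * h ^ 4 / 3 := by
  have hright := norm_sub_taylor_le (n := 3) hh (mod_cast hf) fun y hy =>
    hM y ⟨by linarith [hy.1], hy.2⟩
  have hleft := norm_sub_taylor_le (f := fun y => f (-y)) (n := 3) (x := -x) (M := M) hh
    (mod_cast hf.comp contDiff_neg) fun y hy => by
      rw [iteratedDeriv_comp_neg, norm_smul]
      simpa using hM (-y) ⟨by linarith [hy.2], by linarith [hy.1]⟩
  simp only [iteratedDeriv_comp_neg, neg_neg, neg_add_rev, Finset.sum_range_succ,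
    Finset.sum_range_zero, iteratedDeriv_zero, Nat.factorial] at hright hleft
  refine (le_of_eq_of_le ?_ (norm_add_le_of_le hright hleft)).trans_eq ?_
  · congr 1
    rw [show -h + x = x - h by ring]
    push_cast
    module
  · push_cast
    ring

end CentralDifference

section UnitPeriod

variable {E : Type*}

theorem periodic_iteratedDeriv {𝕜 : Type*} [NontriviallyNormedField 𝕜] [NormedAddCommGroup E]
    [NormedSpace 𝕜 E] {f : 𝕜 → E} {c : 𝕜} (hf : Function.Periodic f c) (k : ℕ) :
    Function.Periodic (iteratedDeriv k f) c := fun x => by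
  have hshift := congrFun (iteratedDeriv_comp_add_const k f c) x
  rwa [funext hf, eq_comm] at hshift

theorem periodic_natCast_div {f : ℝ → E} (hf : Function.Periodic f 1) {n : ℕ} (hn : n ≠ 0) :
    Function.Periodic (fun m : ℕ => f (m / n)) n := fun m => by
  have hn' : (n : ℝ) ≠ 0 := Nat.cast_ne_zero.2 hn
  simp only [Nat.cast_add, add_div, div_self hn', hf (m / n)]

theorem norm_iteratedDeriv_le_iSup [NormedAddCommGroup E] [NormedSpace ℝ E] {φ : ℝ → ℝ → E}
    {S : Set ℝ} {m : ℕ} (hφ : BddAbove ((fun p : ℝ × ℝ => ‖iteratedDeriv m (φ p.1) p.2‖) ''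
      (S ×ˢ Set.Icc 0 1))) {s : ℝ} (hper : Function.Periodic (φ s) 1) (hs : s ∈ S) (x : ℝ) :
    ‖iteratedDeriv m (φ s) x‖ ≤
      ⨆ (s : S) (y : Set.Icc (0 : ℝ) 1), ‖iteratedDeriv m (φ s) y‖ := by
  obtain ⟨y, hy, hxy⟩ := (periodic_iteratedDeriv hper m).exists_mem_Ico₀ one_pos x
  rw [hxy]
  exact le_ciSup₂ (f := fun (s : S) (y : Set.Icc (0 : ℝ) 1) => ‖iteratedDeriv m (φ s) y‖)
    (hφ.mono (Set.iUnion_subset fun s => Set.range_subset_iff.2 fun y =>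
      Set.mem_image_of_mem (fun p : ℝ × ℝ => ‖iteratedDeriv m (φ p.1) p.2‖)
        (Set.mk_mem_prod s.2 y.2)))
    ⟨s, hs⟩ ⟨y, Set.Ico_subset_Icc_self hy⟩

end UnitPeriod

section FiniteDifferences

variable {n : ℕ}

/-- The vector of samples of `f` at the `n` grid points `k / n` of the unit interval, which is how
the exact solution is compared with the semidiscrete one. -/
def gridSample (n : ℕ) (f : ℝ → ℂ) : Fin n → ℂ := fun k => f (k / n)

/-- The truncation error of the finite-difference Laplacian at `f`: the defect in the relation
`-Δ f = H1 f` on the grid, oriented as `H1 f + f''`. -/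
def truncationError (n : ℕ) (f : ℝ → ℂ) : Fin n → ℂ :=
  fdH1 n *ᵥ gridSample n f + gridSample n (iteratedDeriv 2 f)

/-- The semidiscrete control Hamiltonian `a H1 + b H2` for frozen control values `a` and `b`. -/
def controlHamiltonian (n : ℕ) (V : ℝ → ℝ) (a b : ℝ) : Mat n :=
  (a : ℂ) • fdH1 n + (b : ℂ) • fdH2 n V

theorem fdH1_apply [NeZero n] (k l : Fin n) :
    fdH1 n k l =
      if l = k then 2 * (n : ℂ) ^ 2 else if l = k + 1 ∨ l = k - 1 then -(n : ℂ) ^ 2 else 0 := by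
  have hsucc : ((k + 1 : Fin n) : ℕ) = (k + 1) % n := by
    rw [Fin.val_add, Fin.val_one', Nat.add_mod_mod]
  have hpred : ((k - 1 : Fin n) : ℕ) = (k + n - 1) % n := by
    have hk := k.isLt
    rw [Fin.val_sub, Fin.val_one']
    rcases (Nat.one_le_iff_ne_zero.2 (NeZero.ne n)).eq_or_lt with rfl | hn
    · simp only [Nat.mod_one]
    · rw [Nat.mod_eq_of_lt hn]
      congr 1
      omega
  simp only [fdH1, of_apply, Fin.ext_iff, hsucc, hpred]

theorem fdH1_isHermitian (n : ℕ) : (fdH1 n).IsHermitian := by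
  rcases eq_or_ne n 0 with rfl | hn
  · exact Subsingleton.elim _ _
  have : NeZero n := ⟨hn⟩
  refine IsHermitian.ext fun k l => ?_
  have hneighbour : k = l + 1 ∨ k = l - 1 ↔ l = k + 1 ∨ l = k - 1 := by
    rw [or_comm, eq_sub_iff_add_eq, eq_sub_iff_add_eq, @eq_comm _ (k + 1), @eq_comm _ k]
  rw [fdH1_apply, fdH1_apply, if_congr hneighbour rfl rfl, if_congr eq_comm rfl rfl]
  split_ifs <;> simp

theorem controlHamiltonian_isHermitian (n : ℕ) (V : ℝ → ℝ) (a b : ℝ) :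
    (controlHamiltonian n V a b).IsHermitian :=
  ((fdH1_isHermitian n).smul (Complex.conj_ofReal a)).add <|
    (isHermitian_diagonal_iff.2 fun _ => Complex.conj_ofReal _).smul (Complex.conj_ofReal b)

theorem fdH1_mulVec_apply [NeZero n] (hn : 3 ≤ n) (v : Fin n → ℂ) (k : Fin n) :
    (fdH1 n *ᵥ v) k = -(n : ℂ) ^ 2 * (v (k + 1) + v (k - 1) - 2 * v k) := by
  have hone : (1 : Fin n) ≠ 0 := by
    rw [Ne, Fin.ext_iff, Fin.val_one', Nat.mod_eq_of_lt (by omega)]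
    exact one_ne_zero
  have htwo : (1 + 1 : Fin n) ≠ 0 := by
    rw [Ne, Fin.ext_iff, Fin.val_add, Fin.val_one', Nat.mod_eq_of_lt (a := 1) (by omega),
      Nat.mod_eq_of_lt (by omega)]
    exact two_ne_zero
  have hsucc : k + 1 ≠ k := fun h => hone (add_eq_left.1 h)
  have hpred : k - 1 ≠ k := fun h => hone (sub_eq_self.1 h)
  have hsucc_pred : k + 1 ≠ k - 1 := fun h => htwo <| by
    rwa [eq_sub_iff_add_eq, add_assoc, add_eq_left] at h
  have hentry : ∀ l, fdH1 n k l * v l = (if l = k then 2 * (n : ℂ) ^ 2 * v l else 0) +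
      ((if l = k + 1 then -(n : ℂ) ^ 2 * v l else 0) +
        if l = k - 1 then -(n : ℂ) ^ 2 * v l else 0) := by
    intro l
    rw [fdH1_apply]
    grind
  simp only [mulVec, dotProduct, hentry, Finset.sum_add_distrib, Finset.sum_ite_eq',
    Finset.mem_univ, if_true]
  ring

theorem gridSample_add_one [NeZero n] {f : ℝ → ℂ} (hf : Function.Periodic f 1) (k : Fin n) :
    gridSample n f (k + 1) = f (k / n + 1 / n) := by
  have hmod := (periodic_natCast_div hf (NeZero.ne n)).map_mod_nat (k + 1)
  rw [gridSample, Fin.val_add, Fin.val_one', Nat.add_mod_mod, hmod]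
  push_cast
  rw [add_div]

theorem gridSample_sub_one [NeZero n] {f : ℝ → ℂ} (hf : Function.Periodic f 1) (k : Fin n) :
    gridSample n f (k - 1) = f (k / n - 1 / n) := by
  have hshift := gridSample_add_one (hf.sub_const (1 / n)) (k - 1)
  rw [sub_add_cancel, add_sub_cancel_right] at hshift
  exact hshift.symm

theorem norm_truncationError_le (hn : 3 ≤ n) {f : ℝ → ℂ} (hper : Function.Periodic f 1)
    (hf : ContDiff ℝ 4 f) {M : ℝ} (hM : ∀ x, ‖iteratedDeriv 4 f x‖ ≤ M) (k : Fin n) :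
    ‖truncationError n f k‖ ≤ M / (3 * n ^ 2) := by
  have : NeZero n := ⟨by omega⟩
  have hn0 : (n : ℂ) ≠ 0 := NeZero.ne _
  have htaylor := norm_centralDifference_sub_le hf (x := k / n) (h := 1 / n) (by positivity)
    fun y _ => hM y
  have hdefect : truncationError n f k = -(n : ℂ) ^ 2 * (f (k / n + 1 / n) + f (k / n - 1 / n)
      - (2 : ℝ) • f (k / n) - (1 / n : ℝ) ^ 2 • iteratedDeriv 2 f (k / n)) := by
    rw [truncationError, Pi.add_apply, fdH1_mulVec_apply hn, gridSample_add_one hper,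
      gridSample_sub_one hper]
    simp only [gridSample, Complex.real_smul]
    push_cast
    field_simp
    ring
  calc ‖truncationError n f k‖
      ≤ n ^ 2 * (M * (1 / n) ^ 4 / 3) := by
        rw [hdefect, norm_mul, norm_neg, norm_pow, Complex.norm_natCast]
        gcongr
    _ = M / (3 * n ^ 2) := by field_simp

theorem gridSample_eq_of_schrodinger {V : ℝ → ℝ} {f g : ℝ → ℂ} {a b : ℝ}
    (h : ∀ x, Complex.I * g x = -(a : ℂ) * iteratedDeriv 2 f x + (b : ℂ) * (V x : ℂ) * f x) :
    gridSample n g = -Complex.I • controlHamiltonian n V a b *ᵥ gridSample n f +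
      (Complex.I * a) • truncationError n f := by
  ext k
  have hg : g (k / n) = -Complex.I * (Complex.I * g (k / n)) := by
    rw [neg_mul, ← mul_assoc, Complex.I_mul_I, neg_one_mul, neg_neg]
  have hH2 : (fdH2 n V *ᵥ gridSample n f) k = V (k / n) * f (k / n) := mulVec_diagonal _ _ _
  simp only [controlHamiltonian, truncationError, add_mulVec, smul_mulVec, Pi.add_apply,
    Pi.smul_apply, smul_eq_mul, hH2]
  simp only [gridSample]
  rw [hg, h]
  ring

end FiniteDifferences

section SemidiscreteSchrodinger

open Set

variable {n : ℕ} {V f1 f2 : ℝ → ℝ} {φ φt : ℝ → ℝ → ℂ} {ψ : ℝ → Fin n → ℂ}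

theorem hasDerivWithinAt_gridSample_sub {S : Set ℝ} {s : ℝ}
    (hφt : ∀ x, HasDerivWithinAt (fun τ => φ τ x) (φt s x) S s)
    (hPDE : ∀ x, Complex.I * φt s x =
      -(f1 s : ℂ) * iteratedDeriv 2 (φ s) x + (f2 s : ℂ) * (V x : ℂ) * φ s x)
    (hψ : HasDerivWithinAt ψ (-Complex.I • controlHamiltonian n V (f1 s) (f2 s) *ᵥ ψ s) S s) :
    HasDerivWithinAt (fun τ => gridSample n (φ τ) - ψ τ)
      (-Complex.I • controlHamiltonian n V (f1 s) (f2 s) *ᵥ (gridSample n (φ s) - ψ s) +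
        (Complex.I * f1 s) • truncationError n (φ s)) S s := by
  have hsample : HasDerivWithinAt (fun τ => gridSample n (φ τ)) (gridSample n (φt s)) S s :=
    hasDerivWithinAt_pi.2 fun k => hφt (k / n)
  refine (hsample.sub hψ).congr_deriv ?_
  rw [gridSample_eq_of_schrodinger hPDE, mulVec_sub, smul_sub]
  abel

theorem evnorm_gridSample_sub_le (hn : 3 ≤ n) {a b F M : ℝ} (hab : a ≤ b)
    (hφper : ∀ s ∈ Icc a b, Function.Periodic (φ s) 1) (hφx : ∀ s ∈ Icc a b, ContDiff ℝ 4 (φ s))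
    (hφt : ∀ x, ∀ s ∈ Icc a b, HasDerivWithinAt (fun τ => φ τ x) (φt s x) (Icc a b) s)
    (hPDE : ∀ s ∈ Icc a b, ∀ x, Complex.I * φt s x =
      -(f1 s : ℂ) * iteratedDeriv 2 (φ s) x + (f2 s : ℂ) * (V x : ℂ) * φ s x)
    (hψ : ∀ s ∈ Icc a b, HasDerivWithinAt ψ
      (-Complex.I • controlHamiltonian n V (f1 s) (f2 s) *ᵥ ψ s) (Icc a b) s)
    (hF : ∀ s ∈ Icc a b, |f1 s| ≤ F)
    (hM : ∀ s ∈ Icc a b, ∀ x, ‖iteratedDeriv 4 (φ s) x‖ ≤ M) :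
    evnorm (gridSample n (φ b) - ψ b) ≤
      evnorm (gridSample n (φ a) - ψ a) + √n * (F * (M / (3 * n ^ 2))) * (b - a) := by
  have ha : a ∈ Icc a b := left_mem_Icc.2 hab
  have hF0 : 0 ≤ F := (abs_nonneg _).trans (hF a ha)
  have hM0 : 0 ≤ M := (norm_nonneg _).trans (hM a ha 0)
  have hsource : ∀ s ∈ Icc a b,
      evnorm ((Complex.I * f1 s) • truncationError n (φ s)) ≤ √n * (F * (M / (3 * n ^ 2))) :=
    fun s hs => evnorm_le_sqrt_mul (by positivity) fun k => by
      rw [Pi.smul_apply, norm_smul, norm_mul, Complex.norm_I, one_mul, Complex.norm_real]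
      gcongr
      · exact hF s hs
      · exact norm_truncationError_le hn (hφper s hs) (hφx s hs) (hM s hs) k
  exact evnorm_le_add_mul_of_hasDerivWithinAt_isHermitian_add
    (D := fun s => gridSample n (φ s) - ψ s) hab (by positivity)
    (fun s _ => controlHamiltonian_isHermitian n V (f1 s) (f2 s))
    (fun s hs => hasDerivWithinAt_gridSample_sub (fun x => hφt x s hs) (hPDE s hs) (hψ s hs))
    hsource

theorem spatial_semidiscretization_error_general (hn : 3 ≤ n) {T : ℝ}
    (hf1 : BddAbove ((fun s => |f1 s|) '' Icc 0 T))
    (hφper : ∀ t ∈ Icc 0 T, Function.Periodic (φ t) 1) (hφx : ∀ t ∈ Icc 0 T, ContDiff ℝ 4 (φ t))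
    (hφt : ∀ x, ∀ t ∈ Icc 0 T, HasDerivWithinAt (fun τ => φ τ x) (φt t x) (Icc 0 T) t)
    (hφ4 : BddAbove ((fun p : ℝ × ℝ => ‖iteratedDeriv 4 (φ p.1) p.2‖) '' (Icc 0 T ×ˢ Icc 0 1)))
    (hPDE : ∀ t ∈ Icc 0 T, ∀ x, Complex.I * φt t x =
      -(f1 t : ℂ) * iteratedDeriv 2 (φ t) x + (f2 t : ℂ) * (V x : ℂ) * φ t x)
    (hψ0 : ψ 0 = gridSample n (φ 0))
    (hψ : ∀ t ∈ Icc 0 T, HasDerivWithinAt ψ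
      (-Complex.I • controlHamiltonian n V (f1 t) (f2 t) *ᵥ ψ t) (Icc 0 T) t) :
    ∀ t ∈ Icc 0 T, 1 / √n * evnorm (gridSample n (φ t) - ψ t) ≤
      t / (3 * n ^ 2) * (⨆ s : Icc 0 T, |f1 s|) *
        ⨆ (s : Icc 0 t) (y : Icc (0 : ℝ) 1), ‖iteratedDeriv 4 (φ s) y‖ := by
  intro t ht
  have hsub : Icc 0 t ⊆ Icc 0 T := Icc_subset_Icc_right ht.2
  set F := ⨆ s : Icc 0 T, |f1 s|
  set M := ⨆ (s : Icc 0 t) (y : Icc (0 : ℝ) 1), ‖iteratedDeriv 4 (φ s) y‖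
  have hF : ∀ s ∈ Icc 0 t, |f1 s| ≤ F := fun s hs => le_ciSup_set hf1 (hsub hs)
  have hM : ∀ s ∈ Icc 0 t, ∀ x, ‖iteratedDeriv 4 (φ s) x‖ ≤ M := fun s hs =>
    norm_iteratedDeriv_le_iSup (hφ4.mono (image_mono (prod_mono_left hsub)))
      (hφper s (hsub hs)) hs
  have herror := evnorm_gridSample_sub_le hn ht.1 (fun s hs => hφper s (hsub hs))
    (fun s hs => hφx s (hsub hs)) (fun x s hs => (hφt x s (hsub hs)).mono hsub)
    (fun s hs => hPDE s (hsub hs)) (fun s hs => (hψ s (hsub hs)).mono hsub) hF hM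
  rw [hψ0, sub_self, evnorm_zero, zero_add, sub_zero] at herror
  calc 1 / √n * evnorm (gridSample n (φ t) - ψ t)
      ≤ 1 / √n * (√n * (F * (M / (3 * n ^ 2))) * t) := by gcongr
    _ = t / (3 * n ^ 2) * F * M := by field_simp

end SemidiscreteSchrodinger

/-- **Spatial semidiscretization error for the Schrödinger equation with bilinear control
Hamiltonian.** The rescaled 2-norm difference between the sampled exact solution `φ` and the
solution `ψ` of the finite-difference semidiscretization is bounded by
`(t/(3n²)) (sup_{[0,T]} |f1|) sup_{s ∈ [0,t], y ∈ [0,1]} |∂ₓ⁴φ(s,y)|`. -/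
theorem spatial_semidiscretization_error
    (n : ℕ) (hn : 3 ≤ n) (V : ℝ → ℝ)
    (hVper : Function.Periodic V 1) (hV : ContDiff ℝ 4 V)
    (f1 f2 : ℝ → ℝ) (hf1 : Continuous f1) (hf2 : Continuous f2)
    (T : ℝ) (hT : 0 < T)
    (φ : ℝ → ℝ → ℂ) (φt : ℝ → ℝ → ℂ)
    (hφper : ∀ t x : ℝ, φ t (x + 1) = φ t x)
    (hφx : ∀ t : ℝ, ContDiff ℝ 4 (φ t))
    (hφt : ∀ x : ℝ, ∀ t ∈ Set.Icc (0:ℝ) T, HasDerivAt (fun τ => φ τ x) (φt t x) t)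
    (hφtc : ContinuousOn (fun p : ℝ × ℝ => φt p.1 p.2)
      (Set.Icc (0:ℝ) T ×ˢ (Set.univ : Set ℝ)))
    (hφ4c : ContinuousOn (fun p : ℝ × ℝ => iteratedDeriv 4 (φ p.1) p.2)
      (Set.Icc (0:ℝ) T ×ˢ (Set.univ : Set ℝ)))
    (hPDE : ∀ t ∈ Set.Icc (0:ℝ) T, ∀ x : ℝ,
      Complex.I * φt t x =
        -(f1 t : ℂ) * iteratedDeriv 2 (φ t) x + (f2 t : ℂ) * (V x : ℂ) * φ t x)
    (ψ : ℝ → (Fin n → ℂ))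
    (hψ0 : ψ 0 = fun k : Fin n => φ 0 (((k : ℕ) : ℝ) / (n : ℝ)))
    (hψ : ∀ t ∈ Set.Icc (0:ℝ) T,
      HasDerivAt ψ
        ((-Complex.I) • ((f1 t : ℂ) • fdH1 n + (f2 t : ℂ) • fdH2 n V).mulVec (ψ t)) t) :
    ∀ t ∈ Set.Icc (0:ℝ) T,
      (1 / Real.sqrt n) *
          evnorm (fun k : Fin n => φ t (((k : ℕ) : ℝ) / (n : ℝ)) - ψ t k) ≤
        (t / (3 * (n : ℝ)^2)) * (⨆ s : Set.Icc (0:ℝ) T, |f1 s|) *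
          (⨆ (s : Set.Icc (0:ℝ) t) (y : Set.Icc (0:ℝ) 1),
            ‖iteratedDeriv 4 (φ s) y‖) :=
  spatial_semidiscretization_error_general hn (isCompact_Icc.bddAbove_image hf1.abs.continuousOn)
    (fun t _ => hφper t) (fun t _ => hφx t) (fun x t ht => (hφt x t ht).hasDerivWithinAt)
    ((isCompact_Icc.prod isCompact_Icc).bddAbove_image
      (hφ4c.norm.mono (Set.prod_mono_right (Set.subset_univ _))))
    hPDE hψ0 fun t ht => (hψ t ht).hasDerivWithinAt
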